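/- arXiv:1505.03575 — 2 statements merged into one kernel-verified Lean document; each statement's English description precedes it below -/
import Mathlib

section
/- Let 𝛂 = (α_1,…,α_n) and 𝛃 = (β_1,…,β_m), m ≤ n, be spherical chains in the same conjugacy class of ℍ, let A = 𝒥_𝛂 be the lower bidiagonal matrix with diagonal α_1,…,α_n and ones on the first subdiagonal, and let B = 𝒥_𝛃ᵀ be the upper bidiagonal matrix with diagonal β_1,…,β_m and ones on the first superdiagonal. Given quaternions μ_1, …, μ_m with α_n μ_j = μ_j β_j for each j, define Y = [Y_{k,j}] ∈ ℍ^{n×m} by: Y_{k,j} = 0 whenever k + j ≤ n; Y_{n,1} = μ_1; for n−m+1 ≤ k ≤ n−1 and k + j ≥ n + 1, Y_{k,j} = (ᾱ_{k+1} − α_k)⁻¹[ Y_{k+1,j−1}(β̄_j − β_{j−1}) − Y_{k+1,j−2} + Y_{k−1,j} ] (terms with a nonpositive index being 0); and for j = 1, …, m−1, Y_{n,j+1} = μ_{j+1} − Σ_{ℓ=1}^{j} (ᾱ_n − α_{n−1})⁻¹(ᾱ_{n−1} − α_{n−2})⁻¹ ⋯ (ᾱ_{n−ℓ+1} − α_{n−ℓ})⁻¹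 · Y_{n−ℓ+1,j}. Then Y satisfies the homogeneous Sylvester equation AY − YB = 0; and conversely every Y ∈ ℍ^{n×m} with AY − YB = 0 arises in this way from some μ_1, …, μ_m with α_n μ_j = μ_j β_j. -/
open Quaternion Matrix

/-! Write `E k j` for the entries of `A * Y - Y * B`. If all `α k` and `β j` have the same trace and
norm, the residual of the recursion for `Y` at `(k, j)` is a combination of `E k j`, `E (k + 1) j`
and `E (k + 1) (j - 1)`. A solution therefore obeys the recursion; conversely, a `Y` that obeys it
is a solution as soon as the last row of `E` vanishes, by induction on the columns and, within a
column, upwards from the last row. In the last row,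
`E n (j + 1) = α n * μ (j + 1) - μ (j + 1) * β (j + 1)` once column `j` of `E` vanishes: the
products of the `(star (α (k + 1)) - α k)⁻¹` intertwine the `α k` with `α n`, so the sum in
the definition of `Y n (j + 1)` telescopes. -/

section TraceNorm

/-- The element `a` has trace `a + star a = t` and norm `star a * a = N` in the base ring. Over the
real quaternions, the elements of given trace and norm form one conjugacy class. -/
structure HasTraceNorm {K D : Type*} [CommRing K] [Ring D] [Algebra K D] [Star D]
    (t N : K) (a : D) : Prop where
  add_star : a + star a = algebraMap K D t
  star_mul : star a * a = algebraMap K D N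

namespace HasTraceNorm

variable {K D : Type*} [CommRing K] [Ring D] [Algebra K D] [Star D] {t N : K} {a b : D}

theorem star_eq (ha : HasTraceNorm t N a) : star a = t • 1 - a := by
  rw [← Algebra.algebraMap_eq_smul_one, ← ha.add_star, add_sub_cancel_left]

theorem mul_self (ha : HasTraceNorm t N a) : a * a = t • a - N • 1 := by
  have h := ha.star_mul
  rw [ha.star_eq, sub_mul, smul_one_mul, Algebra.algebraMap_eq_smul_one] at h
  rw [← h, sub_sub_cancel]

theorem star_eq_comm (ha : HasTraceNorm t N a) (hb : HasTraceNorm t N b) :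
    star a = b ↔ a = star b := by
  rw [ha.star_eq, hb.star_eq, sub_eq_iff_eq_add, eq_sub_iff_add_eq, eq_comm, add_comm]

theorem semiconjBy_star_sub (ha : HasTraceNorm t N a) (hb : HasTraceNorm t N b) :
    SemiconjBy (star a - b) a b := by
  rw [SemiconjBy, ha.star_eq]
  simp only [mul_sub, sub_mul, ha.mul_self, hb.mul_self, smul_mul_assoc, mul_smul_comm, one_mul,
    mul_one]
  abel

end HasTraceNorm

theorem hasTraceNorm_quaternion (q : ℍ[ℝ]) : HasTraceNorm (2 * q.re) (normSq q) q where
  add_star := Quaternion.self_add_star' q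
  star_mul := Quaternion.star_mul_self q

theorem hasTraceNorm_of_eq_conj {p q : ℍ[ℝ]} (hpq : ∃ h : ℍ[ℝ], h ≠ 0 ∧ p = h⁻¹ * q * h) :
    HasTraceNorm (2 * p.re) (normSq p) q := by
  obtain ⟨h, hh, rfl⟩ := hpq
  have re_mul_comm (x y : ℍ[ℝ]) : (x * y).re = (y * x).re := by
    simp only [Quaternion.re_mul]
    ring
  have hre : (h⁻¹ * q * h).re = q.re := by rw [re_mul_comm, mul_inv_cancel_left₀ hh]
  have hnorm : normSq (h⁻¹ * q * h) = normSq q := by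
    rw [map_mul, mul_comm, ← map_mul, mul_inv_cancel_left₀ hh]
  rw [hre, hnorm]
  exact hasTraceNorm_quaternion q

end TraceNorm

section Grid

/-- The array `y` vanishes in row `0` and column `0`, so that truncated indices refer to zeros. -/
structure IsZeroBordered {D : Type*} [Zero D] (y : ℕ → ℕ → D) : Prop where
  col_zero : ∀ k, y k 0 = 0
  row_zero : ∀ j, y 0 j = 0

theorem exists_isZeroBordered_extension {D : Type*} [Zero D] {n m : ℕ}
    (Y : Matrix (Fin n) (Fin m) D) :
    ∃ y : ℕ → ℕ → D, IsZeroBordered y ∧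
      ∀ (i : Fin n) (j : Fin m), Y i j = y ((i : ℕ) + 1) ((j : ℕ) + 1) := by
  let y : ℕ → ℕ → D := fun
    | k + 1, j + 1 => if h : k < n ∧ j < m then Y ⟨k, h.1⟩ ⟨j, h.2⟩ else 0
    | _, _ => 0
  exact ⟨y, ⟨fun k => by cases k <;> rfl, fun _ => rfl⟩, fun i j => by simp [y]⟩

end Grid

section Bidiagonal

/-- The matrix `𝒥_α`: diagonal `α 1, …, α n` and ones on the first subdiagonal. -/
def lowerBidiagonal {D : Type*} [Zero D] [One D] (α : ℕ → D) (n : ℕ) :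
    Matrix (Fin n) (Fin n) D :=
  Matrix.of fun i j =>
    if (i : ℕ) = (j : ℕ) then α ((i : ℕ) + 1) else if (i : ℕ) = (j : ℕ) + 1 then 1 else 0

/-- The matrix `𝒥_βᵀ`: diagonal `β 1, …, β m` and ones on the first superdiagonal. -/
def upperBidiagonal {D : Type*} [Zero D] [One D] (β : ℕ → D) (m : ℕ) :
    Matrix (Fin m) (Fin m) D :=
  Matrix.of fun i j =>
    if (i : ℕ) = (j : ℕ) then β ((i : ℕ) + 1) else if (j : ℕ) = (i : ℕ) + 1 then 1 else 0

theorem sum_bidiagonal {M : Type*} [AddCommMonoid M] {n : ℕ} (i : Fin n) (f g : ℕ → M)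
    (hg : g 0 = 0) :
    ∑ l : Fin n, (if (i : ℕ) = l then f l else if (i : ℕ) = l + 1 then g (l + 1) else 0) =
      f i + g i := by
  have split_ite (l : ℕ) :
      (if (i : ℕ) = l then f l else if (i : ℕ) = l + 1 then g (l + 1) else 0) =
        (if (i : ℕ) = l then f l else 0) + if (i : ℕ) = l + 1 then g (l + 1) else 0 := by
    split_ifs <;> first | omega | simp
  rw [Fin.sum_univ_eq_sum_range
    (fun l => if (i : ℕ) = l then f l else if (i : ℕ) = l + 1 then g (l + 1) else 0) n]
  simp only [split_ite, Finset.sum_add_distrib]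
  congr 1
  · simp
  · obtain ⟨_ | i, hi⟩ := i
    · simp [hg]
    · simp [Nat.lt_of_succ_lt hi]

/-- The `(k, j)` entry of `A * Y - Y * B` for the bidiagonal `A` and `B`, where the zero-bordered
array `y` holds the entries of `Y`. -/
def sylvesterResidual {D : Type*} [Ring D] (α β : ℕ → D) (y : ℕ → ℕ → D) (k j : ℕ) : D :=
  α k * y k j + y (k - 1) j - (y k j * β j + y k (j - 1))

/-- Column `j` of `A * Y - Y * B` vanishes, including its entry in the zero border. -/
def SolvesColumn {D : Type*} [Ring D] (α β : ℕ → D) (n : ℕ) (y : ℕ → ℕ → D) (j : ℕ) : Prop :=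
  ∀ k ≤ n, sylvesterResidual α β y k j = 0

variable {D : Type*} [Ring D] {α β : ℕ → D} {n m : ℕ} {y : ℕ → ℕ → D}
  {Y : Matrix (Fin n) (Fin m) D}

theorem bidiagonal_sylvester_apply (hy : IsZeroBordered y)
    (hY : ∀ (i : Fin n) (j : Fin m), Y i j = y ((i : ℕ) + 1) ((j : ℕ) + 1))
    (i : Fin n) (j : Fin m) :
    (lowerBidiagonal α n * Y - Y * upperBidiagonal β m) i j =
      sylvesterResidual α β y (i + 1) (j + 1) := by
  have hleft := sum_bidiagonal i (fun l => α (i + 1) * y (l + 1) (j + 1)) (fun k => y k (j + 1))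
    (hy.row_zero _)
  have hright := sum_bidiagonal j (fun l => y (i + 1) (l + 1) * β (l + 1)) (fun l => y (i + 1) l)
    (hy.col_zero _)
  simp only [Matrix.sub_apply, Matrix.mul_apply, lowerBidiagonal, upperBidiagonal, Matrix.of_apply,
    hY, ite_mul, mul_ite, one_mul, mul_one, zero_mul, mul_zero, sylvesterResidual,
    Nat.add_sub_cancel, hleft, ← hright, @eq_comm _ (j : ℕ)]

theorem bidiagonal_sylvester_eq_zero_iff (hy : IsZeroBordered y)
    (hY : ∀ (i : Fin n) (j : Fin m), Y i j = y ((i : ℕ) + 1) ((j : ℕ) + 1)) :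
    lowerBidiagonal α n * Y - Y * upperBidiagonal β m = 0 ↔
      ∀ j ≤ m, SolvesColumn α β n y j := by
  refine ⟨fun h j hj k hk => ?_, fun h => ?_⟩
  · rcases k with _ | k
    · simp [sylvesterResidual, hy.row_zero]
    rcases j with _ | j
    · simp [sylvesterResidual, hy.col_zero]
    exact (bidiagonal_sylvester_apply hy hY ⟨k, hk⟩ ⟨j, hj⟩).symm.trans <| by
      rw [h, Matrix.zero_apply]
  · ext i j
    rw [bidiagonal_sylvester_apply hy hY, h _ j.isLt _ i.isLt, Matrix.zero_apply]

end Bidiagonal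

section Recursion

/-- A spherical chain `α 1, …, α n`, its conjugacy class being given by a trace and a norm. -/
structure IsSphericalChain {K D : Type*} [CommRing K] [Ring D] [Algebra K D] [Star D]
    (t N : K) (α : ℕ → D) (n : ℕ) : Prop where
  hasTraceNorm : ∀ k, 1 ≤ k → k ≤ n → HasTraceNorm t N (α k)
  succ_ne_star : ∀ k, 1 ≤ k → k < n → α (k + 1) ≠ star (α k)

/-- The recursion for `y k j`, multiplied by `star (α (k + 1)) - α k` and brought to one side. -/
def recursionResidual {D : Type*} [Ring D] [Star D] (α β : ℕ → D) (y : ℕ → ℕ → D) (k j : ℕ) : D :=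
  y (k + 1) (j - 1) * (star (β j) - β (j - 1)) - y (k + 1) (j - 2) + y (k - 1) j -
    (star (α (k + 1)) - α k) * y k j

/-- Column `j` of `y` obeys the recursion in all rows above the last one. -/
def RecursiveColumn {D : Type*} [Ring D] [Star D] (α β : ℕ → D) (n : ℕ) (y : ℕ → ℕ → D) (j : ℕ) :
    Prop :=
  ∀ k, 1 ≤ k → k < n → recursionResidual α β y k j = 0

section Ring

variable {K D : Type*} [CommRing K] [Ring D] [Algebra K D] [Star D] {t N : K} {α β : ℕ → D}
  {n m j k : ℕ} {y : ℕ → ℕ → D}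

theorem IsSphericalChain.star_sub_ne_zero (hα : IsSphericalChain t N α n) (hk : 1 ≤ k)
    (hkn : k < n) : star (α (k + 1)) - α k ≠ 0 := fun h =>
  hα.succ_ne_star k hk hkn <| ((hα.hasTraceNorm _ (by omega) hkn).star_eq_comm
    (hα.hasTraceNorm k hk hkn.le)).mp (sub_eq_zero.mp h)

theorem recursionResidual_succ (hα : HasTraceNorm t N (α (k + 1)))
    (hβ : HasTraceNorm t N (β (j + 1))) :
    recursionResidual α β y k (j + 1) =
      sylvesterResidual α β y k (j + 1) + sylvesterResidual α β y (k + 1) j -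
        (star (α (k + 1)) * sylvesterResidual α β y (k + 1) (j + 1) -
          sylvesterResidual α β y (k + 1) (j + 1) * β (j + 1)) := by
  have left_quadratic : α (k + 1) * (α (k + 1) * y (k + 1) (j + 1)) =
      (t • α (k + 1) - N • 1) * y (k + 1) (j + 1) := by rw [← hα.mul_self, mul_assoc]
  have right_quadratic : y (k + 1) (j + 1) * (β (j + 1) * β (j + 1)) =
      y (k + 1) (j + 1) * (t • β (j + 1) - N • 1) := by rw [← hβ.mul_self]
  simp only [recursionResidual, sylvesterResidual, hα.star_eq, hβ.star_eq, Nat.add_sub_cancel,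
    Nat.reduceSubDiff, mul_add, add_mul, mul_sub, sub_mul, smul_mul_assoc, mul_smul_comm, one_mul,
    mul_one, mul_assoc, left_quadratic, right_quadratic]
  abel

theorem SolvesColumn.recursiveColumn_succ (hα : IsSphericalChain t N α n)
    (hβ : HasTraceNorm t N (β (j + 1))) (hj : SolvesColumn α β n y j)
    (hj' : SolvesColumn α β n y (j + 1)) : RecursiveColumn α β n y (j + 1) := by
  intro k _ hkn
  rw [recursionResidual_succ (hα.hasTraceNorm _ (by omega) hkn) hβ, hj' k hkn.le, hj (k + 1) hkn,
    hj' (k + 1) hkn]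
  simp only [mul_zero, zero_mul, sub_zero, add_zero]

theorem SolvesColumn.succ (hα : IsSphericalChain t N α n) (hβ : HasTraceNorm t N (β (j + 1)))
    (hy : IsZeroBordered y) (hj : SolvesColumn α β n y j)
    (hrec : RecursiveColumn α β n y (j + 1)) (hlast : sylvesterResidual α β y n (j + 1) = 0) :
    SolvesColumn α β n y (j + 1) := by
  intro k hk
  induction hk using Nat.decreasingInduction with
  | self => exact hlast
  | of_succ k hkn ih =>
    rcases k with _ | k
    · simp [sylvesterResidual, hy.row_zero]
    have h := recursionResidual_succ (y := y) (hα.hasTraceNorm (k + 2) (by omega) hkn) hβ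
    rw [hrec (k + 1) (by omega) hkn, ih, hj _ hkn] at h
    simpa only [mul_zero, zero_mul, sub_zero, add_zero] using h.symm

theorem eq_zero_of_recursiveColumn [NoZeroDivisors D] (hα : IsSphericalChain t N α n)
    (hy : IsZeroBordered y) (hrec : ∀ j, 1 ≤ j → j ≤ m → RecursiveColumn α β n y j) :
    ∀ k j, k + j ≤ n → j ≤ m → y k j = 0
  | 0, j, _, _ => hy.row_zero j
  | k + 1, 0, _, _ => hy.col_zero (k + 1)
  | k + 1, j + 1, hkj, hjm => by
    have h := hrec (j + 1) (by omega) hjm (k + 1) (by omega) (by omega)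
    simp only [recursionResidual, Nat.add_sub_cancel, Nat.reduceSubDiff,
      eq_zero_of_recursiveColumn hα hy hrec (k + 2) j (by omega) (by omega),
      eq_zero_of_recursiveColumn hα hy hrec (k + 2) (j - 1) (by omega) (by omega),
      eq_zero_of_recursiveColumn hα hy hrec k (j + 1) (by omega) hjm,
      zero_mul, sub_zero, zero_add, zero_sub, neg_eq_zero] at h
    exact (mul_eq_zero.mp h).resolve_left (hα.star_sub_ne_zero (by omega) (by omega))
termination_by k j => (j, k)

theorem mul_sub_mul_of_recursionResidual_eq_zero (hα : HasTraceNorm t N (α (k + 1)))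
    (hβ : HasTraceNorm t N (β (j + 1))) (hrec : recursionResidual α β y k (j + 1) = 0)
    (hsol : sylvesterResidual α β y (k + 1) j = 0) :
    α k * y (k + 1) j - y (k + 1) j * β (j + 1) =
      (star (α (k + 1)) - α k) * (y k (j + 1) - y (k + 1) j) -
        (y (k - 1) (j + 1) - y k j) := by
  rw [← sub_eq_zero]
  calc
    _ = recursionResidual α β y k (j + 1) - sylvesterResidual α β y (k + 1) j := by
      simp only [recursionResidual, sylvesterResidual, hα.star_eq, hβ.star_eq, Nat.add_sub_cancel,
        Nat.reduceSubDiff, mul_sub, sub_mul, smul_mul_assoc, mul_smul_comm, one_mul, mul_one]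
      abel
    _ = 0 := by rw [hrec, hsol, sub_zero]

end Ring

section DivisionRing

variable {K D : Type*} [CommRing K] [DivisionRing D] [Algebra K D] [Star D] {t N : K}
  {α β : ℕ → D} {n m j k : ℕ} {y : ℕ → ℕ → D}

theorem recursionResidual_eq_zero_iff (hk : star (α (k + 1)) - α k ≠ 0) :
    recursionResidual α β y k j = 0 ↔
      y k j = (star (α (k + 1)) - α k)⁻¹ *
        (y (k + 1) (j - 1) * (star (β j) - β (j - 1)) - y (k + 1) (j - 2) + y (k - 1) j) := by
  rw [recursionResidual, sub_eq_zero, eq_inv_mul_iff_mul_eq₀ hk, eq_comm]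

theorem recursiveColumns_iff (hα : IsSphericalChain t N α n)
    (hzero : ∀ k j, k + j ≤ n → j ≤ m → y k j = 0) :
    (∀ j, 1 ≤ j → j ≤ m → RecursiveColumn α β n y j) ↔
      ∀ k j, n - m + 1 ≤ k → k ≤ n - 1 → 1 ≤ j → j ≤ m → n + 1 ≤ k + j →
        y k j = (star (α (k + 1)) - α k)⁻¹ *
          (y (k + 1) (j - 1) * (star (β j) - β (j - 1)) - y (k + 1) (j - 2) + y (k - 1) j) := by
  refine ⟨fun h k j hk hkn hj hjm _ => ?_, fun h j hj hjm k hk hkn => ?_⟩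
  · exact (recursionResidual_eq_zero_iff (hα.star_sub_ne_zero (by omega) (by omega))).mp
      (h j hj hjm k (by omega) (by omega))
  · by_cases hkj : k + j ≤ n
    · simp only [recursionResidual, hzero k j hkj hjm, hzero (k - 1) j (by omega) hjm,
        hzero (k + 1) (j - 1) (by omega) (by omega), hzero (k + 1) (j - 2) (by omega) (by omega),
        zero_mul, mul_zero, sub_zero, add_zero]
    · exact (recursionResidual_eq_zero_iff (hα.star_sub_ne_zero hk hkn)).mpr
        (h k j (by omega) (by omega) hj hjm (by omega))

end DivisionRing

end Recursion

section LastRow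

/-- The product of `(star (α (n - s)) - α (n - s - 1))⁻¹` over `s = 0, …, l - 1`, in this order. -/
def chainInvProd {D : Type*} [DivisionRing D] [Star D] (α : ℕ → D) (n l : ℕ) : D :=
  ((List.range l).map fun s => (star (α (n - s)) - α (n - s - 1))⁻¹).prod

/-- The parameter `μ j` of the last row, recovered from `y` by solving the formula for `y n j`. -/
def lastRowParameter {D : Type*} [DivisionRing D] [Star D] (α : ℕ → D) (n : ℕ) (y : ℕ → ℕ → D)
    (j : ℕ) : D :=
  y n j + ∑ l ∈ Finset.Icc 1 (j - 1), chainInvProd α n l * y (n - l + 1) (j - 1)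

variable {K D : Type*} [CommRing K] [DivisionRing D] [Algebra K D] [Star D] {t N : K}
  {α β : ℕ → D} {n m j k l : ℕ} {y : ℕ → ℕ → D}

theorem chainInvProd_succ (h : k + 1 + l = n) :
    chainInvProd α n (l + 1) = chainInvProd α n l * (star (α (k + 1)) - α k)⁻¹ := by
  simp [chainInvProd, List.range_succ, show n - l = k + 1 by omega]

theorem semiconjBy_chainInvProd (hα : ∀ k, 1 ≤ k → k ≤ n → HasTraceNorm t N (α k)) (hk : 1 ≤ k)
    (h : k + l = n) : SemiconjBy (chainInvProd α n l) (α k) (α n) := by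
  induction l generalizing k with
  | zero => obtain rfl : k = n := h; exact SemiconjBy.one_left _
  | succ l ih =>
    rw [chainInvProd_succ (show k + 1 + l = n by omega)]
    exact (ih (by omega) (by omega)).mul_left
      ((hα (k + 1) (by omega) (by omega)).semiconjBy_star_sub
        (hα k hk (by omega))).inv_symm_left₀

theorem mul_sub_mul_chainInvProd_mul (hα : IsSphericalChain t N α n)
    (hβ : HasTraceNorm t N (β (j + 1))) (hrec : RecursiveColumn α β n y (j + 1))
    (hsol : SolvesColumn α β n y j) (hk : 1 ≤ k) (h : k + 1 + l = n) :
    α n * (chainInvProd α n (l + 1) * y (k + 1) j) -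
        chainInvProd α n (l + 1) * y (k + 1) j * β (j + 1) =
      chainInvProd α n l * (y k (j + 1) - y (k + 1) j) -
        chainInvProd α n (l + 1) * (y (k - 1) (j + 1) - y k j) := by
  have hkn : k < n := by omega
  calc
    _ = chainInvProd α n (l + 1) * (α k * y (k + 1) j - y (k + 1) j * β (j + 1)) := by
      rw [← mul_assoc,
        ← (semiconjBy_chainInvProd hα.hasTraceNorm hk (show k + (l + 1) = n by omega)).eq,
        mul_assoc, mul_assoc, ← mul_sub]
    _ = chainInvProd α n (l + 1) * ((star (α (k + 1)) - α k) * (y k (j + 1) - y (k + 1) j)) -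
          chainInvProd α n (l + 1) * (y (k - 1) (j + 1) - y k j) := by
      rw [mul_sub_mul_of_recursionResidual_eq_zero (hα.hasTraceNorm _ (by omega) hkn) hβ
        (hrec k hk hkn) (hsol _ hkn), mul_sub]
    _ = _ := by
      rw [← mul_assoc (chainInvProd α n (l + 1)), chainInvProd_succ h,
        inv_mul_cancel_right₀ (hα.star_sub_ne_zero hk hkn)]

theorem mul_sub_mul_sum_chainInvProd_mul (hα : IsSphericalChain t N α n)
    (hβ : HasTraceNorm t N (β (j + 1))) (hrec : RecursiveColumn α β n y (j + 1))
    (hsol : SolvesColumn α β n y j) (hk : 1 ≤ k) (h : k + l = n) :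
    α n * (∑ i ∈ Finset.Icc 1 l, chainInvProd α n i * y (n - i + 1) j) -
        (∑ i ∈ Finset.Icc 1 l, chainInvProd α n i * y (n - i + 1) j) * β (j + 1) =
      y (n - 1) (j + 1) - y n j - chainInvProd α n l * (y (k - 1) (j + 1) - y k j) := by
  induction l generalizing k with
  | zero => obtain rfl : k = n := h; simp [chainInvProd]
  | succ l ih =>
    rw [Finset.sum_Icc_succ_top (by omega), mul_add, add_mul, add_sub_add_comm,
      ih (k := k + 1) (by omega) (by omega), show n - (l + 1) = k by omega,
      mul_sub_mul_chainInvProd_mul hα hβ hrec hsol hk (by omega), Nat.add_sub_cancel,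
      sub_add_sub_cancel]

theorem sylvesterResidual_last_row (hα : IsSphericalChain t N α n)
    (hβ : HasTraceNorm t N (β (j + 1))) (hjn : j < n) (hzero : y (n - j) j = 0)
    (hzero' : y (n - j - 1) (j + 1) = 0) (hrec : RecursiveColumn α β n y (j + 1))
    (hsol : SolvesColumn α β n y j) :
    sylvesterResidual α β y n (j + 1) =
      α n * lastRowParameter α n y (j + 1) - lastRowParameter α n y (j + 1) * β (j + 1) := by
  have htelescope := mul_sub_mul_sum_chainInvProd_mul hα hβ hrec hsol
    (show 1 ≤ n - j by omega) (Nat.sub_add_cancel hjn.le)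
  rw [hzero, hzero', sub_zero, mul_zero, sub_zero] at htelescope
  rw [lastRowParameter, Nat.add_sub_cancel, mul_add, add_mul, add_sub_add_comm, htelescope,
    sylvesterResidual, Nat.add_sub_cancel, add_sub_add_comm]

theorem solvesColumns_iff (hmn : m ≤ n) (hα : IsSphericalChain t N α n)
    (hβ : ∀ j, 1 ≤ j → j ≤ m → HasTraceNorm t N (β j)) (hy : IsZeroBordered y) :
    (∀ j ≤ m, SolvesColumn α β n y j) ↔
      (∀ k j, k + j ≤ n → j ≤ m → y k j = 0) ∧
        (∀ j, 1 ≤ j → j ≤ m → RecursiveColumn α β n y j) ∧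
          ∀ j, 1 ≤ j → j ≤ m → α n * lastRowParameter α n y j = lastRowParameter α n y j * β j := by
  have residual_eq (hzero : ∀ k j, k + j ≤ n → j ≤ m → y k j = 0) {j : ℕ} (hjm : j + 1 ≤ m) :=
    sylvesterResidual_last_row (y := y) hα (hβ (j + 1) (by omega) hjm) (by omega)
      (hzero (n - j) j (by omega) (by omega)) (hzero (n - j - 1) (j + 1) (by omega) hjm)
  constructor
  · intro hsol
    have hrec : ∀ j, 1 ≤ j → j ≤ m → RecursiveColumn α β n y j
      | j + 1, hj, hjm => (hsol j (by omega)).recursiveColumn_succ hα (hβ _ hj hjm) (hsol _ hjm)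
    have hzero := eq_zero_of_recursiveColumn hα hy hrec
    refine ⟨hzero, hrec, ?_⟩
    rintro (_ | j) hj hjm
    · omega
    · rw [← sub_eq_zero, ← residual_eq hzero hjm (hrec _ hj hjm) (hsol j (by omega)),
        hsol _ hjm n le_rfl]
  · rintro ⟨hzero, hrec, hparam⟩ j hjm
    induction j with
    | zero => intro k _; simp [sylvesterResidual, hy.col_zero]
    | succ j ih =>
      have hrec' := hrec (j + 1) (by omega) hjm
      have hsol := ih (by omega)
      refine hsol.succ hα (hβ _ (by omega) hjm) hy hrec' ?_
      rw [residual_eq hzero hjm hrec' hsol, hparam _ (by omega) hjm, sub_self]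

end LastRow

theorem homogeneous_solutions_parametrization_general {K D : Type*} [CommRing K] [DivisionRing D]
    [Algebra K D] [Star D] {t N : K} {n m : ℕ} (hmn : m ≤ n) {α β : ℕ → D}
    (hα : IsSphericalChain t N α n) (hβ : ∀ j, 1 ≤ j → j ≤ m → HasTraceNorm t N (β j))
    (Y : Matrix (Fin n) (Fin m) D) :
    lowerBidiagonal α n * Y - Y * upperBidiagonal β m = 0 ↔
      ∃ (y : ℕ → ℕ → D) (μ : ℕ → D),
        (∀ i, y i 0 = 0) ∧ (∀ j, y 0 j = 0) ∧
        (∀ j, 1 ≤ j → j ≤ m → α n * μ j = μ j * β j) ∧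
        (∀ k j, 1 ≤ k → k ≤ n → 1 ≤ j → j ≤ m → k + j ≤ n → y k j = 0) ∧
        (y n 1 = μ 1) ∧
        (∀ k j, n - m + 1 ≤ k → k ≤ n - 1 → 1 ≤ j → j ≤ m → n + 1 ≤ k + j →
          y k j = (star (α (k + 1)) - α k)⁻¹ *
            (y (k + 1) (j - 1) * (star (β j) - β (j - 1)) - y (k + 1) (j - 2) +
              y (k - 1) j)) ∧
        (∀ j, 1 ≤ j → j ≤ m - 1 →
          y n (j + 1) = μ (j + 1) - ∑ l ∈ Finset.Icc 1 j, chainInvProd α n l * y (n - l + 1) j) ∧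
        (∀ (i : Fin n) (j : Fin m), Y i j = y ((i : ℕ) + 1) ((j : ℕ) + 1)) := by
  constructor
  · intro hY
    obtain ⟨y, hy, hYy⟩ := exists_isZeroBordered_extension Y
    obtain ⟨hzero, hrec, hparam⟩ := (solvesColumns_iff hmn hα hβ hy).mp
      ((bidiagonal_sylvester_eq_zero_iff hy hYy).mp hY)
    exact ⟨y, lastRowParameter α n y, hy.col_zero, hy.row_zero, hparam,
      fun k j _ _ _ hjm hkj => hzero k j hkj hjm, by simp [lastRowParameter],
      (recursiveColumns_iff hα hzero).mp hrec, fun j _ _ => (add_sub_cancel_right _ _).symm, hYy⟩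
  · rintro ⟨y, μ, hcol, hrow, hμ, hzero, hfirst, hrec, hlast, hYy⟩
    have hy : IsZeroBordered y := ⟨hcol, hrow⟩
    have hzero' : ∀ k j, k + j ≤ n → j ≤ m → y k j = 0
      | 0, j, _, _ => hrow j
      | k, 0, _, _ => hcol k
      | k + 1, j + 1, hkj, hjm => hzero _ _ (by omega) (by omega) (by omega) hjm hkj
    have hparam : ∀ j, 1 ≤ j → j ≤ m → lastRowParameter α n y j = μ j
      | 1, _, _ => by simp [lastRowParameter, hfirst]
      | j + 2, _, hjm => add_eq_of_eq_sub (hlast (j + 1) (by omega) (by omega))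
    refine (bidiagonal_sylvester_eq_zero_iff hy hYy).mpr ((solvesColumns_iff hmn hα hβ hy).mpr
      ⟨hzero', (recursiveColumns_iff hα hzero').mpr hrec, fun j hj hjm => ?_⟩)
    rw [hparam j hj hjm, hμ j hj hjm]

/-- parametrization of homogeneous solutions.  With spherical chains
`𝛂 = (α_1,…,α_n)`, `𝛃 = (β_1,…,β_m)`, `m ≤ n`, in the same conjugacy class, `A = 𝒥_𝛂`
lower bidiagonal and `B = 𝒥_𝛃ᵀ` upper bidiagonal, a matrix `Y ∈ ℍ^{n×m}` satisfies
`AY − YB = 0` if and only if its entries arise, via the recipe (5.3)–(5.5) of the paper,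
from parameters `μ_1, …, μ_m` with `α_n μ_j = μ_j β_j`.
(All indexing of `α, β, y, μ` is 1-based, with index `0` realizing the
"nonpositive index ↦ 0" convention; the matrices are indexed by `Fin`.) -/
theorem homogeneous_solutions_parametrization (n m : ℕ) (hmn : m ≤ n) (α β : ℕ → ℍ[ℝ])
    (hαconj : ∀ i j, 1 ≤ i → i ≤ n → 1 ≤ j → j ≤ n →
      ∃ h : ℍ[ℝ], h ≠ 0 ∧ α i = h⁻¹ * α j * h)
    (hβconj : ∀ i j, 1 ≤ i → i ≤ m → 1 ≤ j → j ≤ m →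
      ∃ h : ℍ[ℝ], h ≠ 0 ∧ β i = h⁻¹ * β j * h)
    (hαβconj : ∀ i j, 1 ≤ i → i ≤ n → 1 ≤ j → j ≤ m →
      ∃ h : ℍ[ℝ], h ≠ 0 ∧ α i = h⁻¹ * β j * h)
    (hαchain : ∀ k, 1 ≤ k → k < n → α (k + 1) ≠ star (α k))
    (hβchain : ∀ k, 1 ≤ k → k < m → β (k + 1) ≠ star (β k))
    (A : Matrix (Fin n) (Fin n) ℍ[ℝ])
    (hA : A = Matrix.of fun (i j : Fin n) =>
      if (i : ℕ) = (j : ℕ) then α ((i : ℕ) + 1)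
      else if (i : ℕ) = (j : ℕ) + 1 then 1 else 0)
    (B : Matrix (Fin m) (Fin m) ℍ[ℝ])
    (hB : B = Matrix.of fun (i j : Fin m) =>
      if (i : ℕ) = (j : ℕ) then β ((i : ℕ) + 1)
      else if (j : ℕ) = (i : ℕ) + 1 then 1 else 0) :
    ∀ Y : Matrix (Fin n) (Fin m) ℍ[ℝ],
      A * Y - Y * B = 0 ↔
        ∃ (y : ℕ → ℕ → ℍ[ℝ]) (μ : ℕ → ℍ[ℝ]),
          (∀ i, y i 0 = 0) ∧ (∀ j, y 0 j = 0) ∧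
          (∀ j, 1 ≤ j → j ≤ m → α n * μ j = μ j * β j) ∧
          (∀ k j, 1 ≤ k → k ≤ n → 1 ≤ j → j ≤ m → k + j ≤ n → y k j = 0) ∧
          (y n 1 = μ 1) ∧
          (∀ k j, n - m + 1 ≤ k → k ≤ n - 1 → 1 ≤ j → j ≤ m → n + 1 ≤ k + j →
            y k j = (star (α (k + 1)) - α k)⁻¹ *
              (y (k + 1) (j - 1) * (star (β j) - β (j - 1)) - y (k + 1) (j - 2) +
                y (k - 1) j)) ∧
          (∀ j, 1 ≤ j → j ≤ m - 1 →
            y n (j + 1) = μ (j + 1) - ∑ ℓ ∈ Finset.Icc 1 j,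
              (((List.range ℓ).map fun t => (star (α (n - t)) - α (n - t - 1))⁻¹).prod) *
                y (n - ℓ + 1) j) ∧
          (∀ (i : Fin n) (j : Fin m), Y i j = y ((i : ℕ) + 1) ((j : ℕ) + 1)) := by
  subst hA hB
  exact homogeneous_solutions_parametrization_general (t := 2 * (α n).re) (N := normSq (α n)) hmn
    ⟨fun k hk hkn => hasTraceNorm_of_eq_conj (hαconj n k (by omega) le_rfl hk hkn), hαchain⟩
    fun j hj hjm => hasTraceNorm_of_eq_conj (hαβconj n j (by omega) le_rfl hj hjm)
end

section
/- Let α and β be conjugate non-real quaternions, let n ≥ m ≥ 1, and let A = 𝒥_n(α) and B = 𝒥_m(β)ᵀ be quaternion Jordan blocks. A matrix Y = [Y_{k,j}] ∈ ℍ^{n×m} satisfies AY = YB if and only if there exist quaternions μ_1, …, μ_m with αμ_i = μ_iβ for i = 1, …, m such that Y_{k,j} = 0 whenever 2 ≤ k + j ≤ n and Y_{k,j} = μ_{k+j−n} whenever n + 1 ≤ k + j ≤ n + m. In other words, the solutions are exactly the 'triangular' Hankel matrices that vanish on the counter-diagonals k + j ≤ n and are constant on each counter-diagonal k + j = n + i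 with value μ_i satisfying αμ_i = μ_iβ. -/
open Quaternion Matrix

/-!
Write `𝒥_n(α) = αI + F` and `𝒥_m(β)ᵀ = βI + Fᵀ`. The Sylvester operator `Y ↦ AY - YB` is then the
sum of `T : Y ↦ αY - Yβ` and `N : Y ↦ FY - YFᵀ`, which commute because `F` has entries `0` and `1`.
Since `N` is nilpotent and `ker T² = ker T`, the kernel of `T + N` is `ker T ∩ ker N`. The equation
`FY = YFᵀ` says that each entry equals its lower left neighbour, with zeros above and to the left of
the matrix, so `Y` is Hankel and is determined by its last row.

For `ker T² = ker T` it suffices that `1` is not a commutator: if `y = αx - xβ` were nonzero with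
`αy = yβ`, then `β(y⁻¹x) - (y⁻¹x)β = y⁻¹(αx - xβ) = 1`. In `ℍ` every commutator has real part zero.
-/

section Kernel

variable {R M : Type*} [Semiring R] [AddCommGroup M] [Module R M]

theorem ker_add_eq_inf_of_isNilpotent {f g : Module.End R M} (hfg : Commute f g)
    (hf : ∀ x, f (f x) = 0 → f x = 0) (hg : IsNilpotent g) :
    LinearMap.ker (f + g) = LinearMap.ker f ⊓ LinearMap.ker g := by
  have apply_eq_zero (p : ℕ) : ∀ x, (g ^ p) x = 0 → f x + g x = 0 → f x = 0 := by
    induction p with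
    | zero =>
      intro x hx _
      rw [show x = 0 from hx, map_zero]
    | succ p ih =>
      intro x hp hx
      have hcomm : f (g x) = g (f x) := LinearMap.congr_fun hfg x
      have hgx : f (g x) = 0 := ih (g x) (by rwa [pow_succ] at hp) (by
        rw [hcomm, ← map_add, hx, map_zero])
      exact hf x (by rw [eq_neg_of_add_eq_zero_left hx, map_neg, hgx, neg_zero])
  obtain ⟨p, hp⟩ := hg
  ext x
  simp only [LinearMap.mem_ker, LinearMap.add_apply, Submodule.mem_inf]
  constructor
  · intro hx
    have hfx : f x = 0 := apply_eq_zero p x (by rw [hp, LinearMap.zero_apply]) hx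
    exact ⟨hfx, by rwa [hfx, zero_add] at hx⟩
  · rintro ⟨hfx, hgx⟩
    rw [hfx, hgx, add_zero]

end Kernel

section Sylvester

variable {ι κ R : Type*} [Fintype ι] [Fintype κ] [Ring R]

/-- The Sylvester operator `X ↦ AX - XB`, whose kernel consists of the matrices intertwining `B`
and `A`. It is only `ℤ`-linear because the entries need not commute. -/
def sylvester (A : Matrix ι ι R) (B : Matrix κ κ R) : Module.End ℤ (Matrix ι κ R) :=
  mulLeftLinearMap κ ℤ A - mulRightLinearMap ι ℤ B

theorem sylvester_apply (A : Matrix ι ι R) (B : Matrix κ κ R) (X : Matrix ι κ R) :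
    sylvester A B X = A * X - X * B := rfl

theorem mem_ker_sylvester {A : Matrix ι ι R} {B : Matrix κ κ R} {X : Matrix ι κ R} :
    X ∈ LinearMap.ker (sylvester A B) ↔ A * X = X * B := by
  rw [LinearMap.mem_ker, sylvester_apply, sub_eq_zero]

theorem sylvester_add (A A' : Matrix ι ι R) (B B' : Matrix κ κ R) :
    sylvester (A + A') (B + B') = sylvester A B + sylvester A' B' := by
  ext1 X
  simp only [sylvester_apply, LinearMap.add_apply, Matrix.add_mul, Matrix.mul_add]
  abel

theorem commute_sylvester {A A' : Matrix ι ι R} {B B' : Matrix κ κ R}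
    (hA : Commute A A') (hB : Commute B B') : Commute (sylvester A B) (sylvester A' B') := by
  ext1 X
  have hAX : A * (A' * X) = A' * (A * X) := by
    rw [← Matrix.mul_assoc, hA.eq, Matrix.mul_assoc]
  have hXB : X * B' * B = X * B * B' := by
    rw [Matrix.mul_assoc, ← hB.eq, Matrix.mul_assoc]
  simp only [Module.End.mul_apply, sylvester_apply, Matrix.mul_sub, Matrix.sub_mul, hAX, hXB,
    Matrix.mul_assoc A, Matrix.mul_assoc A']
  abel

theorem isNilpotent_sylvester [DecidableEq ι] [DecidableEq κ] {A : Matrix ι ι R}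
    {B : Matrix κ κ R} (hA : IsNilpotent A) (hB : IsNilpotent B) :
    IsNilpotent (sylvester A B) := by
  obtain ⟨p, hp⟩ := hA
  obtain ⟨q, hq⟩ := hB
  refine Commute.isNilpotent_sub (commute_mulLeftLinearMap_mulRightLinearMap A B)
    ⟨p, ?_⟩ ⟨q, ?_⟩
  · rw [pow_mulLeftLinearMap, hp, mulLeftLinearMap_zero_eq_zero]
  · rw [pow_mulRightLinearMap, hq, mulRightLinearMap_zero_eq_zero]

theorem sylvester_scalar_apply [DecidableEq ι] [DecidableEq κ] (α β : R) (X : Matrix ι κ R)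
    (i : ι) (j : κ) : sylvester (scalar ι α) (scalar κ β) X i j = α * X i j - X i j * β := by
  rw [sylvester_apply, Matrix.sub_apply, scalar_apply, scalar_apply, diagonal_mul, mul_diagonal]

end Sylvester

theorem isNilpotent_of_apply_ne_zero_lt {ι R : Type*} [Fintype ι] [DecidableEq ι] [Semiring R]
    {M : Matrix ι ι R} (b : ι → ℕ) (hM : ∀ i j, M i j ≠ 0 → b j < b i) : IsNilpotent M := by
  have pow_apply_eq_zero (p : ℕ) : ∀ i j, b i < b j + p → (M ^ p) i j = 0 := by
    induction p with
    | zero =>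
      intro i j hij
      rw [pow_zero, one_apply_ne]
      rintro rfl
      exact lt_irrefl _ hij
    | succ p ih =>
      intro i j hij
      rw [pow_succ', mul_apply]
      refine Finset.sum_eq_zero fun l _ => ?_
      by_cases hil : M i l = 0
      · rw [hil, zero_mul]
      · have hlt : b l < b i := hM i l hil
        rw [ih l j (by omega), mul_zero]
  refine ⟨Finset.univ.sup b + 1, ?_⟩
  ext i j
  have hi : b i ≤ Finset.univ.sup b := Finset.le_sup (Finset.mem_univ i)
  exact pow_apply_eq_zero _ i j (by omega)

section LowerShift

variable {R : Type*} [Semiring R] {n m : ℕ}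

variable (R) in
/-- The matrix `F_n` with ones on the first subdiagonal and zeros elsewhere. -/
def lowerShift (n : ℕ) : Matrix (Fin n) (Fin n) R :=
  of fun i j => if (i : ℕ) = j + 1 then 1 else 0

theorem lowerShift_apply (i j : Fin n) :
    lowerShift R n i j = if (i : ℕ) = j + 1 then 1 else 0 := rfl

theorem isNilpotent_lowerShift : IsNilpotent (lowerShift R n) :=
  isNilpotent_of_apply_ne_zero_lt (fun i => i) fun i j hij => by
    by_contra! hlt
    exact hij (if_neg (by omega))

theorem isNilpotent_lowerShift_transpose : IsNilpotent (lowerShift R n)ᵀ :=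
  isNilpotent_of_apply_ne_zero_lt (fun i => n - i) fun i j hij => by
    by_contra! hlt
    exact hij (if_neg (by omega))

theorem commute_scalar_lowerShift (α : R) : Commute (scalar (Fin n) α) (lowerShift R n) := by
  refine scalar_commute_iff.2 (Matrix.ext fun i j => ?_)
  simp only [Matrix.smul_apply, lowerShift_apply, smul_eq_mul, mul_ite, mul_one, mul_zero,
    MulOpposite.smul_eq_mul_unop, MulOpposite.unop_op, ite_mul, one_mul, zero_mul]

theorem commute_scalar_lowerShift_transpose (α : R) :
    Commute (scalar (Fin n) α) (lowerShift R n)ᵀ :=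
  scalar_commute_iff.2 <| by
    rw [← transpose_smul, scalar_commute_iff.1 (commute_scalar_lowerShift α), transpose_smul]

theorem lowerShift_mul_apply (Y : Matrix (Fin n) (Fin m) R) (k : Fin n) (j : Fin m) :
    (lowerShift R n * Y) k j = if _ : 1 ≤ (k : ℕ) then Y ⟨k - 1, by omega⟩ j else 0 := by
  simp only [mul_apply, lowerShift_apply, ite_mul, one_mul, zero_mul]
  split_ifs with hk
  · rw [Finset.sum_eq_single_of_mem ⟨k - 1, by omega⟩ (Finset.mem_univ _), if_pos (by grind)]
    exact fun l _ hl => if_neg (by grind)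
  · exact Finset.sum_eq_zero fun l _ => if_neg (by omega)

theorem mul_lowerShift_transpose_apply (Y : Matrix (Fin n) (Fin m) R) (k : Fin n) (j : Fin m) :
    (Y * (lowerShift R m)ᵀ) k j = if _ : 1 ≤ (j : ℕ) then Y k ⟨j - 1, by omega⟩ else 0 := by
  simp only [mul_apply, transpose_apply, lowerShift_apply, mul_ite, mul_one, mul_zero]
  split_ifs with hj
  · rw [Finset.sum_eq_single_of_mem ⟨j - 1, by omega⟩ (Finset.mem_univ _), if_pos (by grind)]
    exact fun l _ hl => if_neg (by grind)
  · exact Finset.sum_eq_zero fun l _ => if_neg (by omega)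

theorem apply_eq_apply_add_sub_of_lowerShift_mul_eq {Y : Matrix (Fin n) (Fin m) R}
    (hY : lowerShift R n * Y = Y * (lowerShift R m)ᵀ) (d : ℕ) (k : Fin n) (j : Fin m)
    (hk : (k : ℕ) + d < n) :
    Y k j = if _ : d ≤ (j : ℕ) then Y ⟨k + d, hk⟩ ⟨j - d, by omega⟩ else 0 := by
  induction d with
  | zero => simp
  | succ d ih =>
    rw [ih (by omega)]
    by_cases hd : d ≤ (j : ℕ)
    · have entry := congrFun₂ hY ⟨k + (d + 1), hk⟩ ⟨j - d, by omega⟩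
      rw [lowerShift_mul_apply, mul_lowerShift_transpose_apply, dif_pos (by grind)] at entry
      rw [dif_pos hd]
      refine entry.trans ?_
      grind
    · rw [dif_neg hd, dif_neg (by omega)]

end LowerShift

section TriangularHankel

variable {R : Type*} {n m : ℕ}

/-- The "triangular" Hankel matrices: in one-based indices, `Y` vanishes where `k + j ≤ n` and is
constantly `μ i` on the counter-diagonal `k + j = n + i` for `i ≥ 1`. The indices of `Fin` start at
zero, hence the successors; the subtraction is never truncated. -/
def IsTriangularHankel [Zero R] (μ : ℕ → R) (Y : Matrix (Fin n) (Fin m) R) : Prop :=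
  ∀ (k : Fin n) (j : Fin m),
    (((k : ℕ) + 1) + ((j : ℕ) + 1) ≤ n → Y k j = 0) ∧
    (n + 1 ≤ ((k : ℕ) + 1) + ((j : ℕ) + 1) → Y k j = μ ((((k : ℕ) + 1) + ((j : ℕ) + 1)) - n))

theorem IsTriangularHankel.apply_eq_of_add_eq [Zero R] {μ : ℕ → R}
    {Y : Matrix (Fin n) (Fin m) R} (hY : IsTriangularHankel μ Y) {k k' : Fin n}
    {j j' : Fin m} (h : (k : ℕ) + j = k' + j') : Y k j = Y k' j' := by
  rcases le_or_gt ((k : ℕ) + 1 + (j + 1)) n with hkj | hkj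
  · rw [(hY k j).1 hkj, (hY k' j').1 (by omega)]
  · rw [(hY k j).2 hkj, (hY k' j').2 (by omega)]
    congr 1
    omega

theorem IsTriangularHankel.lowerShift_mul_eq [Semiring R] {μ : ℕ → R}
    {Y : Matrix (Fin n) (Fin m) R} (hmn : m ≤ n) (hY : IsTriangularHankel μ Y) :
    lowerShift R n * Y = Y * (lowerShift R m)ᵀ := by
  ext k j
  rw [lowerShift_mul_apply, mul_lowerShift_transpose_apply]
  split_ifs with hk hj hj
  · exact hY.apply_eq_of_add_eq (by grind)
  · exact (hY _ _).1 (by grind)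
  · exact ((hY _ _).1 (by grind)).symm
  · rfl

theorem exists_isTriangularHankel_of_lowerShift_mul_eq [Semiring R]
    {Y : Matrix (Fin n) (Fin m) R} (hY : lowerShift R n * Y = Y * (lowerShift R m)ᵀ) :
    ∃ μ : ℕ → R, IsTriangularHankel μ Y := by
  let lastRow (i : ℕ) : R :=
    if _ : 0 < n ∧ 1 ≤ i ∧ i ≤ m then Y ⟨n - 1, by omega⟩ ⟨i - 1, by omega⟩ else 0
  refine ⟨lastRow, fun k j => ?_⟩
  rw [apply_eq_apply_add_sub_of_lowerShift_mul_eq hY (n - 1 - k) k j (by omega)]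
  constructor
  · intro hkj
    exact dif_neg (by omega)
  · intro hkj
    have hlast : lastRow (k + 1 + (j + 1) - n) =
        Y ⟨n - 1, by omega⟩ ⟨k + 1 + (j + 1) - n - 1, by omega⟩ := dif_pos (by omega)
    rw [dif_pos (by omega), hlast]
    congr 2 <;> omega

theorem lowerShift_mul_eq_mul_transpose_iff [Semiring R] (hmn : m ≤ n)
    (Y : Matrix (Fin n) (Fin m) R) :
    lowerShift R n * Y = Y * (lowerShift R m)ᵀ ↔ ∃ μ : ℕ → R, IsTriangularHankel μ Y :=
  ⟨exists_isTriangularHankel_of_lowerShift_mul_eq, fun ⟨_, hY⟩ => hY.lowerShift_mul_eq hmn⟩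

theorem IsTriangularHankel.forall_mul_eq_mul_iff [MulZeroClass R] {μ : ℕ → R}
    {Y : Matrix (Fin n) (Fin m) R} (hmn : m ≤ n) (hY : IsTriangularHankel μ Y) (α β : R) :
    (∀ k j, α * Y k j = Y k j * β) ↔ ∀ i, 1 ≤ i → i ≤ m → α * μ i = μ i * β := by
  constructor
  · intro hαβ i hi him
    have hlast : Y ⟨n - 1, by omega⟩ ⟨i - 1, by omega⟩ = μ i := by
      rw [(hY _ _).2 (by grind)]
      grind
    rw [← hlast, hαβ]
  · intro hμ k j
    rcases le_or_gt ((k : ℕ) + 1 + (j + 1)) n with hkj | hkj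
    · rw [(hY k j).1 hkj, mul_zero, zero_mul]
    · rw [(hY k j).2 hkj]
      exact hμ _ (by omega) (by omega)

end TriangularHankel

section JordanBlock

variable {R : Type*} [Semiring R] {n : ℕ}

/-- The lower triangular Jordan block `𝒥_n(α) = αI_n + F_n`. -/
def jordanBlock (n : ℕ) (α : R) : Matrix (Fin n) (Fin n) R :=
  scalar (Fin n) α + lowerShift R n

theorem jordanBlock_eq_of (α : R) :
    jordanBlock n α = of fun (i j : Fin n) =>
      if (i : ℕ) = (j : ℕ) then α else if (i : ℕ) = (j : ℕ) + 1 then 1 else 0 := by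
  ext1 i j
  rw [jordanBlock, Matrix.add_apply, scalar_apply, diagonal_apply, lowerShift_apply, of_apply]
  simp only [Fin.ext_iff]
  split_ifs <;> first | omega | simp only [add_zero, zero_add]

theorem jordanBlock_transpose_eq_of (α : R) :
    (jordanBlock n α)ᵀ = of fun (i j : Fin n) =>
      if (i : ℕ) = (j : ℕ) then α else if (j : ℕ) = (i : ℕ) + 1 then 1 else 0 := by
  ext1 i j
  rw [transpose_apply, jordanBlock_eq_of, of_apply, of_apply]
  simp only [eq_comm]

theorem jordanBlock_transpose (α : R) :
    (jordanBlock n α)ᵀ = scalar (Fin n) α + (lowerShift R n)ᵀ := by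
  rw [jordanBlock, transpose_add, scalar_apply, diagonal_transpose]

end JordanBlock

section Intertwining

variable {R : Type*} [Ring R] {n m : ℕ}

theorem jordanBlock_mul_eq_mul_transpose_iff {α β : R}
    (hαβ : ∀ x, α * (α * x - x * β) = (α * x - x * β) * β → α * x = x * β)
    (Y : Matrix (Fin n) (Fin m) R) :
    jordanBlock n α * Y = Y * (jordanBlock m β)ᵀ ↔
      (∀ k j, α * Y k j = Y k j * β) ∧ lowerShift R n * Y = Y * (lowerShift R m)ᵀ := by
  have ker_le (X : Matrix (Fin n) (Fin m) R)
      (hX : sylvester (scalar _ α) (scalar _ β) (sylvester (scalar _ α) (scalar _ β) X) = 0) :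
      sylvester (scalar _ α) (scalar _ β) X = 0 := by
    ext k j
    have entry := congrFun₂ hX k j
    rw [sylvester_scalar_apply, sylvester_scalar_apply, Matrix.zero_apply, sub_eq_zero] at entry
    rw [sylvester_scalar_apply, hαβ _ entry, sub_self, Matrix.zero_apply]
  rw [← mem_ker_sylvester, ← mem_ker_sylvester, jordanBlock_transpose, jordanBlock, sylvester_add,
    ker_add_eq_inf_of_isNilpotent
      (commute_sylvester (commute_scalar_lowerShift α) (commute_scalar_lowerShift_transpose β))
      ker_le (isNilpotent_sylvester isNilpotent_lowerShift isNilpotent_lowerShift_transpose),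
    Submodule.mem_inf, LinearMap.mem_ker, ← Matrix.ext_iff]
  simp only [sylvester_scalar_apply, Matrix.zero_apply, sub_eq_zero]

theorem homogeneous_jordan_hankel_general (hmn : m ≤ n) {α β : R}
    (hαβ : ∀ x, α * (α * x - x * β) = (α * x - x * β) * β → α * x = x * β)
    (Y : Matrix (Fin n) (Fin m) R) :
    jordanBlock n α * Y = Y * (jordanBlock m β)ᵀ ↔
      ∃ μ : ℕ → R, (∀ i, 1 ≤ i → i ≤ m → α * μ i = μ i * β) ∧ IsTriangularHankel μ Y := by
  rw [jordanBlock_mul_eq_mul_transpose_iff hαβ, lowerShift_mul_eq_mul_transpose_iff hmn,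
    ← exists_and_left]
  exact exists_congr fun μ => and_congr_left fun hY => hY.forall_mul_eq_mul_iff hmn α β

end Intertwining

theorem mul_eq_mul_of_commutator_ne_one {D : Type*} [DivisionRing D]
    (hD : ∀ a b : D, a * b - b * a ≠ 1) {α β x : D}
    (hx : α * (α * x - x * β) = (α * x - x * β) * β) : α * x = x * β := by
  by_contra hne
  set y := α * x - x * β with hy
  have hy0 : y ≠ 0 := sub_ne_zero.2 hne
  have hyα : y⁻¹ * α = β * y⁻¹ := by
    rw [inv_mul_eq_iff_eq_mul₀ hy0, ← mul_assoc, ← hx, mul_assoc, mul_inv_cancel₀ hy0, mul_one]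
  refine hD β (y⁻¹ * x) ?_
  calc β * (y⁻¹ * x) - y⁻¹ * x * β = y⁻¹ * y := by
        rw [hy, mul_sub, ← hy, ← mul_assoc, ← mul_assoc, ← mul_assoc, hyα]
    _ = 1 := inv_mul_cancel₀ hy0

theorem quaternion_commutator_ne_one {R : Type*} [CommRing R] [Nontrivial R] (p q : ℍ[R]) :
    p * q - q * p ≠ 1 := by
  intro h
  have hre : (p * q - q * p).re = 0 := by
    rw [Quaternion.re_sub, Quaternion.re_mul, Quaternion.re_mul]
    ring
  rw [h, Quaternion.re_one] at hre
  exact one_ne_zero hre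

/-- homogeneous equation for Jordan blocks.  Let `α ∼ β` be conjugate
non-real quaternions, `n ≥ m ≥ 1`, `A = 𝒥_n(α)`, `B = 𝒥_m(β)ᵀ`.  Then `Y ∈ ℍ^{n×m}`
satisfies `AY = YB` if and only if there are `μ_1, …, μ_m` with `αμ_i = μ_iβ` such that
`Y_{k,j} = 0` for `k + j ≤ n` and `Y_{k,j} = μ_{k+j−n}` for `n + 1 ≤ k + j ≤ n + m`
(1-based indices `k, j`; i.e. the solutions are exactly the "triangular" Hankel matrices
with counter-diagonal values in the plane `{μ : αμ = μβ}`). -/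
theorem homogeneous_jordan_hankel (n m : ℕ) (hm1 : 1 ≤ m) (hmn : m ≤ n)
    (α β : ℍ[ℝ]) (hα : α.im ≠ 0) (hβ : β.im ≠ 0)
    (hconj : ∃ h : ℍ[ℝ], h ≠ 0 ∧ α = h⁻¹ * β * h)
    (A : Matrix (Fin n) (Fin n) ℍ[ℝ])
    (hA : A = Matrix.of fun (i j : Fin n) =>
      if (i : ℕ) = (j : ℕ) then α else if (i : ℕ) = (j : ℕ) + 1 then 1 else 0)
    (B : Matrix (Fin m) (Fin m) ℍ[ℝ])
    (hB : B = Matrix.of fun (i j : Fin m) =>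
      if (i : ℕ) = (j : ℕ) then β else if (j : ℕ) = (i : ℕ) + 1 then 1 else 0)
    (Y : Matrix (Fin n) (Fin m) ℍ[ℝ]) :
    A * Y = Y * B ↔
      ∃ μ : ℕ → ℍ[ℝ],
        (∀ i, 1 ≤ i → i ≤ m → α * μ i = μ i * β) ∧
        (∀ (k : Fin n) (j : Fin m),
          (((k : ℕ) + 1) + ((j : ℕ) + 1) ≤ n → Y k j = 0) ∧
          (n + 1 ≤ ((k : ℕ) + 1) + ((j : ℕ) + 1) →
            Y k j = μ ((((k : ℕ) + 1) + ((j : ℕ) + 1)) - n))) := by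
  rw [hA, hB, ← jordanBlock_eq_of, ← jordanBlock_transpose_eq_of]
  exact homogeneous_jordan_hankel_general hmn
    (fun _ => mul_eq_mul_of_commutator_ne_one quaternion_commutator_ne_one) Y
end
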